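/- Let 𝒢 = (G_1, …, G_ℓ) be a connected temporal graph and let S be an orbit of Aut(𝒢). Let T be a proper subset of S and let W be a temporal walk starting at time step t and ending at time step t' (with t, t' ∈ [ℓ]) whose first vertex lies in S and which visits exactly k different vertices of S. Then for any X ⊆ S with |X| > |T| there exists a temporal walk W' starting at some vertex u' ∈ X at time step t and ending at time step t' that visits at least ((|X| − |T|)/|X|)·k vertices of S ∖ T. -/

import Mathlib

/-!
The walk `W'` is an automorphic image `σ ∘ W`, with `σ` found by averaging. Since `Aut(𝒢)` acts
transitively on the orbit `S`, the number `m` of automorphisms mapping `v` to `w` is the same for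
all `v, w ∈ S` (`card_autsMapping`). Hence exactly `m * |X|` automorphisms send the start of `W`
into `X`. Among the pairs `(σ, v)` with `σ` such an automorphism and `v` one of the `k` visited
vertices of `S`, at most `k * m * |T|` satisfy `σ v ∈ T`. So some `σ` maps at most `k * |T| / |X|`
of the `k` visited vertices into `T` (`exists_good_aut`), and all the others into `S \ T`.
-/

open scoped BigOperators

/-- A temporal graph on a finite vertex set `V`: a lifetime `ℓ` together with a
snapshot graph `snap t` for every time step `t` (only `t ∈ [1, ℓ]` is relevant). -/
structure TemporalGraph (V : Type) [Fintype V] where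
  lifetime : ℕ
  snap : ℕ → SimpleGraph V

namespace TemporalGraph

variable {V : Type} [Fintype V]

/-- A temporal graph is connected if every snapshot within its lifetime is connected. -/
def IsConnectedTG (𝒢 : TemporalGraph V) : Prop :=
  ∀ t, 1 ≤ t → t ≤ 𝒢.lifetime → (𝒢.snap t).Connected

/-- `W` is a temporal walk starting at time step `t` and ending at time step `t'`:
at each time step `s` with `t ≤ s < t'` it either waits or traverses an edge of
the snapshot `G_s`. -/
def IsWalk (𝒢 : TemporalGraph V) (W : ℕ → V) (t t' : ℕ) : Prop :=
  1 ≤ t ∧ t ≤ t' ∧ t' ≤ 𝒢.lifetime ∧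
    ∀ s, t ≤ s → s < t' → W (s + 1) = W s ∨ (𝒢.snap s).Adj (W s) (W (s + 1))

/-- The set of vertices visited by `W` between time steps `t` and `t'`. -/
def visited (W : ℕ → V) (t t' : ℕ) : Set V := W '' Set.Icc t t'

/-- `σ` is an automorphism of the temporal graph `𝒢`, i.e. an automorphism of
every snapshot within the lifetime. -/
def IsAut (𝒢 : TemporalGraph V) (σ : Equiv.Perm V) : Prop :=
  ∀ t, 1 ≤ t → t ≤ 𝒢.lifetime →
    ∀ u v : V, (𝒢.snap t).Adj u v ↔ (𝒢.snap t).Adj (σ u) (σ v)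

/-- The orbit of a vertex `u` under `Aut(𝒢)`. -/
def orbit (𝒢 : TemporalGraph V) (u : V) : Set V :=
  {v | ∃ σ : Equiv.Perm V, 𝒢.IsAut σ ∧ σ u = v}

/-- `S` is an orbit of `Aut(𝒢)`. -/
def IsOrbit (𝒢 : TemporalGraph V) (S : Set V) : Prop :=
  ∃ u : V, S = 𝒢.orbit u

/-- The orbit number of `𝒢`: the number of orbits of `Aut(𝒢)` on `V`. -/
noncomputable def orbitNumber (𝒢 : TemporalGraph V) : ℕ :=
  (Set.range 𝒢.orbit).ncard

/-- Vertices reachable from `u` by a temporal walk starting at time step `t`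
and ending at a time step at most `t'`. -/
def reachSet (𝒢 : TemporalGraph V) (u : V) (t t' : ℕ) : Set V :=
  {v | ∃ t'' ≤ t', ∃ W : ℕ → V, 𝒢.IsWalk W t t'' ∧ W t = u ∧ W t'' = v}

/-- `W` is a temporal walk that only traverses orbit boundary edges
(edges between two different orbits); waiting is allowed. -/
def IsBoundaryWalk (𝒢 : TemporalGraph V) (W : ℕ → V) (t t' : ℕ) : Prop :=
  1 ≤ t ∧ t ≤ t' ∧ t' ≤ 𝒢.lifetime ∧
    ∀ s, t ≤ s → s < t' → W (s + 1) = W s ∨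
      ((𝒢.snap s).Adj (W s) (W (s + 1)) ∧ 𝒢.orbit (W s) ≠ 𝒢.orbit (W (s + 1)))

/-- The lane `L_{t,t'}(X)`: all vertices reachable from some vertex of `X` by a
temporal walk starting at time step `t`, ending at a time step at most `t'`,
that only uses orbit boundary edges. -/
def lane (𝒢 : TemporalGraph V) (X : Set V) (t t' : ℕ) : Set V :=
  {v | ∃ u ∈ X, ∃ t'' ≤ t', ∃ W : ℕ → V, 𝒢.IsBoundaryWalk W t t'' ∧ W t = u ∧ W t'' = v}

end TemporalGraph

namespace TemporalGraph

variable {V : Type} [Fintype V] {𝒢 : TemporalGraph V}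

lemma IsAut.mul {σ τ : Equiv.Perm V} (hσ : 𝒢.IsAut σ) (hτ : 𝒢.IsAut τ) : 𝒢.IsAut (σ * τ) :=
  fun t h1 h2 u v => (hτ t h1 h2 u v).trans (hσ t h1 h2 (τ u) (τ v))

lemma IsAut.inv {σ : Equiv.Perm V} (hσ : 𝒢.IsAut σ) : 𝒢.IsAut σ⁻¹ := by
  intro t h1 h2 u v
  simpa using (hσ t h1 h2 (σ⁻¹ u) (σ⁻¹ v)).symm

lemma IsOrbit.exists_aut {S : Set V} (hS : 𝒢.IsOrbit S) {v w : V} (hv : v ∈ S) (hw : w ∈ S) :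
    ∃ σ : Equiv.Perm V, 𝒢.IsAut σ ∧ σ v = w := by
  obtain ⟨u, rfl⟩ := hS
  obtain ⟨α, hα, rfl⟩ := hv
  obtain ⟨β, hβ, rfl⟩ := hw
  exact ⟨β * α⁻¹, hβ.mul hα.inv, by simp⟩

lemma IsOrbit.map_mem {S : Set V} (hS : 𝒢.IsOrbit S) {σ : Equiv.Perm V} (hσ : 𝒢.IsAut σ)
    {v : V} (hv : v ∈ S) : σ v ∈ S := by
  obtain ⟨u, rfl⟩ := hS
  obtain ⟨α, hα, rfl⟩ := hv
  exact ⟨σ * α, hσ.mul hα, rfl⟩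

lemma IsWalk.map {W : ℕ → V} {t t' : ℕ} (hW : 𝒢.IsWalk W t t') {σ : Equiv.Perm V}
    (hσ : 𝒢.IsAut σ) : 𝒢.IsWalk (σ ∘ W) t t' := by
  obtain ⟨h1, h2, h3, h4⟩ := hW
  refine ⟨h1, h2, h3, fun s hs hs' => ?_⟩
  rcases h4 s hs hs' with h | h
  · exact Or.inl (congrArg σ h)
  · exact Or.inr ((hσ s (by omega) (by omega) _ _).1 h)

open Classical in
/-- The automorphisms of `𝒢` that map `v` into the set `Y`. -/
noncomputable def autsInto (𝒢 : TemporalGraph V) (v : V) (Y : Finset V) :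
    Finset (Equiv.Perm V) :=
  Finset.univ.filter fun σ => 𝒢.IsAut σ ∧ σ v ∈ Y

lemma mem_autsInto {v : V} {Y : Finset V} {σ : Equiv.Perm V} :
    σ ∈ 𝒢.autsInto v Y ↔ 𝒢.IsAut σ ∧ σ v ∈ Y := by
  classical
  simp [autsInto]

/-- Composing with automorphisms that map `v'` to `v` and `w` to `w'` injects the automorphisms
`v ↦ w` into the automorphisms `v' ↦ w'`. -/
lemma card_autsMapping_le {S : Set V} (hS : 𝒢.IsOrbit S) {v w v' w' : V} (hv : v ∈ S)
    (hw : w ∈ S) (hv' : v' ∈ S) (hw' : w' ∈ S) :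
    (𝒢.autsInto v {w}).card ≤ (𝒢.autsInto v' {w'}).card := by
  obtain ⟨α, hα, hαv⟩ := hS.exists_aut hv' hv
  obtain ⟨β, hβ, hβw⟩ := hS.exists_aut hw hw'
  refine Finset.card_le_card_of_injOn (fun σ => β * σ * α) ?_ ?_
  · intro σ hσ
    have h := mem_autsInto.1 (Finset.mem_coe.1 hσ)
    refine Finset.mem_coe.2 (mem_autsInto.2 ⟨(hβ.mul h.1).mul hα, ?_⟩)
    have h2 := Finset.mem_singleton.1 h.2
    simp [hαv, h2, hβw]
  · intro σ _ τ _ h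
    simpa using h

lemma card_autsMapping {S : Set V} (hS : 𝒢.IsOrbit S) {v w v' w' : V} (hv : v ∈ S)
    (hw : w ∈ S) (hv' : v' ∈ S) (hw' : w' ∈ S) :
    (𝒢.autsInto v {w}).card = (𝒢.autsInto v' {w'}).card :=
  le_antisymm (card_autsMapping_le hS hv hw hv' hw') (card_autsMapping_le hS hv' hw' hv hw)

lemma card_autsInto {S : Set V} (hS : 𝒢.IsOrbit S) {u v : V} (hu : u ∈ S) (hv : v ∈ S)
    {Y : Finset V} (hY : (Y : Set V) ⊆ S) :
    (𝒢.autsInto v Y).card = Y.card * (𝒢.autsInto u {u}).card := by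
  classical
  rw [Finset.card_eq_sum_card_fiberwise (f := fun σ : Equiv.Perm V => σ v) (t := Y)
    (fun σ hσ => (mem_autsInto.1 (Finset.mem_coe.1 hσ)).2)]
  refine Finset.sum_const_nat fun w hw => ?_
  rw [← card_autsMapping hS hv (hY hw) hu hu]
  congr 1
  ext σ
  simp only [Finset.mem_filter, mem_autsInto, Finset.mem_singleton]
  constructor
  · rintro ⟨⟨h, _⟩, h'⟩
    exact ⟨h, h'⟩
  · rintro ⟨h, h'⟩
    exact ⟨⟨h, h' ▸ hw⟩, h'⟩

open Classical in
/-- The averaging step: some automorphism sends `u` into `X` and maps at most a fraction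
`|T| / |X|` of `K` into `T`. -/
lemma exists_good_aut {S : Set V} (hS : 𝒢.IsOrbit S) {u : V} (hu : u ∈ S) {K T X : Finset V}
    (hK : (K : Set V) ⊆ S) (hT : (T : Set V) ⊆ S) (hX : (X : Set V) ⊆ S) (hXne : X.Nonempty) :
    ∃ σ : Equiv.Perm V, 𝒢.IsAut σ ∧ σ u ∈ X ∧
      (K.filter fun v => σ v ∈ T).card * X.card ≤ K.card * T.card := by
  have hne : (𝒢.autsInto u X).Nonempty := by
    obtain ⟨x, hx⟩ := hXne
    obtain ⟨σ, hσ, hσu⟩ := hS.exists_aut hu (hX hx)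
    exact ⟨σ, mem_autsInto.2 ⟨hσ, hσu ▸ hx⟩⟩
  have hsum : ∑ σ ∈ 𝒢.autsInto u X, (K.filter fun v => σ v ∈ T).card
      ≤ K.card * (T.card * (𝒢.autsInto u {u}).card) := by
    calc ∑ σ ∈ 𝒢.autsInto u X, (K.filter fun v => σ v ∈ T).card
        = ∑ v ∈ K, ((𝒢.autsInto u X).filter fun σ => σ v ∈ T).card :=
          Finset.sum_card_bipartiteAbove_eq_sum_card_bipartiteBelow
            (fun (σ : Equiv.Perm V) (v : V) => σ v ∈ T)
      _ ≤ ∑ v ∈ K, (𝒢.autsInto v T).card := by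
          refine Finset.sum_le_sum fun v _ => Finset.card_le_card fun σ hσ => ?_
          obtain ⟨h1, h2⟩ := Finset.mem_filter.1 hσ
          exact mem_autsInto.2 ⟨(mem_autsInto.1 h1).1, h2⟩
      _ = K.card * (T.card * (𝒢.autsInto u {u}).card) :=
          Finset.sum_const_nat fun v hv => card_autsInto hS hu (hK hv) hT
  obtain ⟨σ, hσ, hle⟩ := Finset.exists_le_of_sum_le
    (f := fun σ : Equiv.Perm V => (K.filter fun v => σ v ∈ T).card * X.card)
    (g := fun _ => K.card * T.card) hne (by
      rw [← Finset.sum_mul, Finset.sum_const, smul_eq_mul, card_autsInto hS hu hu hX]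
      calc _ ≤ K.card * (T.card * (𝒢.autsInto u {u}).card) * X.card :=
            Nat.mul_le_mul_right _ hsum
        _ = _ := by ring)
  exact ⟨σ, (mem_autsInto.1 hσ).1, (mem_autsInto.1 hσ).2, hle⟩

end TemporalGraph

/-- Corollary 3.3: given `T ⊊ S`, a temporal walk `W` from time `t` to `t'`
starting in `S` and visiting exactly `k` vertices of `S`, and any `X ⊆ S` with `|X| > |T|`,
there is a temporal walk `W'` from `t` to `t'` starting at some vertex of `X` that visits
at least `((|X| - |T|)/|X|)·k` vertices of `S \ T`. -/
theorem transform_walk_restricted {V : Type} [Fintype V] (𝒢 : TemporalGraph V)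
    (hconn : 𝒢.IsConnectedTG) (S : Set V) (hS : 𝒢.IsOrbit S)
    (T : Set V) (hT : T ⊂ S)
    (W : ℕ → V) (t t' : ℕ) (hW : 𝒢.IsWalk W t t') (hstart : W t ∈ S)
    (k : ℕ) (hk : (TemporalGraph.visited W t t' ∩ S).ncard = k)
    (X : Set V) (hX : X ⊆ S) (hXT : T.ncard < X.ncard) :
    ∃ W' : ℕ → V, 𝒢.IsWalk W' t t' ∧ W' t ∈ X ∧
      (((X.ncard : ℝ) - (T.ncard : ℝ)) / (X.ncard : ℝ)) * (k : ℝ)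
        ≤ ((TemporalGraph.visited W' t t' ∩ (S \ T)).ncard : ℝ) := by
  classical
  subst hk
  have hXpos : 0 < X.ncard := by omega
  set K : Set V := TemporalGraph.visited W t t' ∩ S with hKdef
  obtain ⟨σ, hσ, hσX, hle⟩ := TemporalGraph.exists_good_aut hS hstart
    (K := K.toFinset) (T := T.toFinset) (X := X.toFinset)
    (by simp [hKdef]) (by simpa using hT.subset) (by simpa using hX)
    (by simpa using Set.nonempty_of_ncard_ne_zero hXpos.ne')
  refine ⟨σ ∘ W, hW.map hσ, by simpa using hσX, ?_⟩
  simp only [← Set.ncard_eq_toFinset_card'] at hle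
  have hsplit := Finset.card_filter_add_card_filter_not (s := K.toFinset)
    (fun v => σ v ∈ T.toFinset)
  rw [← Set.ncard_eq_toFinset_card'] at hsplit
  -- The visited vertices of `S` not mapped into `T` give distinct visited vertices of `S \ T`.
  have himg : (K.toFinset.filter fun v => ¬ σ v ∈ T.toFinset).card
      ≤ (TemporalGraph.visited (σ ∘ W) t t' ∩ (S \ T)).ncard := by
    rw [← Finset.card_image_of_injective _ σ.injective, ← Set.ncard_coe_finset]
    refine Set.ncard_le_ncard ?_ (Set.toFinite _)
    intro w hw
    obtain ⟨v, hv, rfl⟩ := Finset.mem_image.1 (Finset.mem_coe.1 hw)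
    obtain ⟨hvK, hvT⟩ := Finset.mem_filter.1 hv
    obtain ⟨⟨s, hs, rfl⟩, hvS⟩ := Set.mem_toFinset.1 hvK
    exact ⟨⟨s, hs, rfl⟩, hS.map_mem hσ hvS, fun h => hvT (Set.mem_toFinset.2 h)⟩
  have hXpos' : (0 : ℝ) < X.ncard := by exact_mod_cast hXpos
  rw [div_mul_eq_mul_div, div_le_iff₀ hXpos']
  have h1 := (Nat.cast_le (α := ℝ)).2 hle
  have h2 := congrArg (Nat.cast : ℕ → ℝ) hsplit
  have h3 := mul_le_mul_of_nonneg_right ((Nat.cast_le (α := ℝ)).2 himg) hXpos'.le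
  push_cast at h1 h2 h3
  rw [← h2] at h1 ⊢
  nlinarith
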